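/- Let d be a positive integer, let λ = 9nS²A_max²R_max/(1−γ)², fix an agent i and a state s, and let π be a strategy profile of a finite discounted stochastic game. Suppose that for every action a^i ∈ 𝔸^i there exists a strategy profile π_{a^i} with ‖π − π_{a^i}‖∞ ≤ 1/d and (f(π_{a^i}))^i(s,a^i) ≤ π_{a^i}^i(s,a^i), and moreover (f(π_{a^i}))^j(v,b^j) − π_{a^i}^j(v,b^j) ≥ (f(π_{a^i}))^i(s,a^i) − π_{a^i}^i(s,a^i) for all agents j, states v, and actions b^j. Then ‖f(π) − π‖∞ ≤ A_max²(λ+1)/d. -/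

import Mathlib

/-!
Write `G π = f π - π` for the displacement of Nash's map and `δ = 1 / d`. Two facts carry the proof.

*Zero row sums.* For every agent `j` and state `v`, both `π j v` and `f π j v` sum to one, so
`∑ b, G π j v b = 0` (`SG.sum_f_sub`). Hence a one-sided bound on a row of `G π` gives a bound on
the other side, at the price of a factor `A_max - 1`.

*Lipschitz estimate.* `G` is `(λ + 1)`-Lipschitz in the sup norm (`SG.f_sub_lipschitz`). The product
measures of two profiles at distance `δ` differ by at most `n A_max δ` in `ℓ¹`
(`SG.sum_abs_prod_sub_prod_le`, one factor replaced at a time). Subtracting the two Bellman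
equations, the contraction factor `γ` gives `|V - V'| ≤ n A_max R_max δ / (1 - γ)²`
(`SG.V_lipschitz`). One-step deviation preserves the distance of profiles, so `D` is Lipschitz with
twice this constant, and the quotient defining `f` costs a factor `A_max + 1`. It is important to
estimate `f - id` and not `f`: this leaves `1` as the only term that does not scale with `R_max`.

With `L = λ + 1`: the hypothesis gives `G π i s a ≤ L δ` for all `a`, so `G π i s a ≥ -(A_max-1) L δ`
by the zero row sum, so `G πa i s a ≥ -A_max L δ`. As `(i, s, a)` minimizes the displacement at
`πa`, it follows that `G π j v b ≥ -(A_max+1) L δ` everywhere, and the zero row sums once more give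
`G π j v b ≤ (A_max-1) (A_max+1) L δ`.
-/


open Finset

/-- A finite discounted stochastic game with `n` agents, `S` states and
action counts `A i` for each agent `i`. -/
structure SG (n S : ℕ) (A : Fin n → ℕ) where
  P : Fin S → (∀ i, Fin (A i)) → Fin S → ℝ
  r : Fin n → Fin S → (∀ i, Fin (A i)) → ℝ
  Rmax : ℝ
  γ : ℝ
  P_nonneg : ∀ s a s', 0 ≤ P s a s'
  P_sum_one : ∀ s a, ∑ s', P s a s' = 1
  r_nonneg : ∀ i s a, 0 ≤ r i s a
  r_le_Rmax : ∀ i s a, r i s a ≤ Rmax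
  γ_nonneg : 0 ≤ γ
  γ_lt_one : γ < 1

namespace SG

variable {n S : ℕ} {A : Fin n → ℕ}

/-- A (behavioral) strategy profile: agent `i` plays at state `s` the distribution
`π i s` on its actions. -/
abbrev Profile (n S : ℕ) (A : Fin n → ℕ) := ∀ i : Fin n, Fin S → Fin (A i) → ℝ

/-- `π` is a genuine strategy profile: each `π i s` is a probability distribution. -/
def IsProfile (π : Profile n S A) : Prop :=
  (∀ i s a, 0 ≤ π i s a) ∧ ∀ i s, ∑ a, π i s a = 1

/-- `A_max`, the largest number of actions of any agent. -/
def Amax (A : Fin n → ℕ) : ℕ := Finset.univ.sup A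

/-- Probability of the joint action `a` at state `s` under profile `π`. -/
def jointProb (π : Profile n S A) (s : Fin S) (a : ∀ i, Fin (A i)) : ℝ :=
  ∏ i, π i s (a i)

/-- The state-transition matrix `P^π` induced by the profile `π`. -/
noncomputable def Pmat (g : SG n S A) (π : Profile n S A) : Matrix (Fin S) (Fin S) ℝ :=
  fun s s' => ∑ a, jointProb π s a * g.P s a s'

/-- Expected one-step reward `r^{i,π}(s)` of agent `i` at state `s` under `π`. -/
noncomputable def rvec (g : SG n S A) (π : Profile n S A) (i : Fin n) (s : Fin S) : ℝ :=
  ∑ a, jointProb π s a * g.r i s a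

/-- The value function `V^{π^i,π^{-i}}` of agent `i` under profile `π`: the unique
solution of the Bellman equation `V = r^{i,π} + γ P^π V`, i.e. `(I − γP^π)⁻¹ r^{i,π}`. -/
noncomputable def V (g : SG n S A) (π : Profile n S A) (i : Fin n) : Fin S → ℝ :=
  Matrix.mulVec (1 - g.γ • g.Pmat π)⁻¹ (g.rvec π i)

/-- The profile obtained from `π` by letting agent `i` play the pure action `a`
at state `s` (and `π i` at every other state). -/
def devProfile (π : Profile n S A) (i : Fin n) (s : Fin S) (a : Fin (A i)) : Profile n S A :=
  Function.update π i (fun t b => if t = s then (if b = a then (1 : ℝ) else 0) else π i t b)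

/-- The one-step-deviation value `V^{π^i,π^{-i}}_{π^i(s,a)=1}(s)`. -/
noncomputable def Vdev (g : SG n S A) (π : Profile n S A) (i : Fin n) (s : Fin S)
    (a : Fin (A i)) : ℝ :=
  g.V (devProfile π i s a) i s

/-- `D^{π}_{a}(s) = max(0, V^{π^i,π^{-i}}_{π^i(s,a)=1}(s) − V^{π^i,π^{-i}}(s))`. -/
noncomputable def D (g : SG n S A) (π : Profile n S A) (i : Fin n) (s : Fin S)
    (a : Fin (A i)) : ℝ :=
  max 0 (g.Vdev π i s a - g.V π i s)

/-- Nash's improvement map `f` on strategy profiles. -/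
noncomputable def f (g : SG n S A) (π : Profile n S A) : Profile n S A :=
  fun i s a => (π i s a + g.D π i s a) / (1 + ∑ b, g.D π i s b)

/-- `π` is a Markov perfect equilibrium: no agent can improve its value at any state
by unilaterally switching to another behavioral strategy. -/
def IsMPE (g : SG n S A) (π : Profile n S A) : Prop :=
  ∀ (s : Fin S) (i : Fin n) (σ : Fin S → Fin (A i) → ℝ),
    ((∀ t b, 0 ≤ σ t b) ∧ ∀ t, ∑ b, σ t b = 1) →
    g.V (Function.update π i σ) i s ≤ g.V π i s

/-- `π` is an `ε`-approximate Markov perfect equilibrium. -/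
def IsApproxMPE (g : SG n S A) (π : Profile n S A) (ε : ℝ) : Prop :=
  ∀ (s : Fin S) (i : Fin n) (σ : Fin S → Fin (A i) → ℝ),
    ((∀ t b, 0 ≤ σ t b) ∧ ∀ t, ∑ b, σ t b = 1) →
    g.V (Function.update π i σ) i s - ε ≤ g.V π i s

end SG

namespace SG

variable {n S : ℕ} {A : Fin n → ℕ}

/-! ### Product distributions -/

lemma sum_jointProb {π : Profile n S A} (hπ : IsProfile π) (s : Fin S) :
    ∑ a, jointProb π s a = 1 := by
  have h := Finset.prod_univ_sum (fun i => (Finset.univ : Finset (Fin (A i))))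
    (fun i b => π i s b)
  rw [Fintype.piFinset_univ] at h
  unfold jointProb
  rw [← h]
  exact Finset.prod_eq_one fun i _ => hπ.2 i s

lemma jointProb_nonneg {π : Profile n S A} (hπ : IsProfile π) (s : Fin S)
    (a : ∀ i, Fin (A i)) : 0 ≤ jointProb π s a :=
  Finset.prod_nonneg fun i _ => hπ.1 i s (a i)

/-- The `ℓ¹` distance between two product distributions is at most the sum of the `ℓ¹` distances
of their factors, where `T` collects the factors in which they may differ. -/
lemma sum_abs_prod_sub_prod_le (p q : ∀ i : Fin n, Fin (A i) → ℝ)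
    (hp : ∀ i b, 0 ≤ p i b) (hp1 : ∀ i, ∑ b, p i b = 1)
    (hq : ∀ i b, 0 ≤ q i b) (hq1 : ∀ i, ∑ b, q i b = 1) (T : Finset (Fin n)) :
    ∑ a : ∀ i, Fin (A i), |∏ i, (if i ∈ T then q i (a i) else p i (a i)) - ∏ i, p i (a i)|
      ≤ ∑ i ∈ T, ∑ b, |p i b - q i b| := by
  classical
  induction T using Finset.induction_on with
  | empty => simp
  | insert j T hj ih =>
    rw [Finset.sum_insert hj]
    -- Replacing factor `j` changes the hybrid product by a product whose `j`-th factor is `q - p`.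
    have key : ∑ a : ∀ i, Fin (A i),
        |∏ i, (if i ∈ insert j T then q i (a i) else p i (a i))
          - ∏ i, (if i ∈ T then q i (a i) else p i (a i))| = ∑ b, |p j b - q j b| := by
      have h := Finset.prod_univ_sum (fun i => (Finset.univ : Finset (Fin (A i))))
        (fun i b => if i = j then |p i b - q i b| else if i ∈ T then q i b else p i b)
      rw [Fintype.piFinset_univ] at h
      have h2 : ∏ i, ∑ b : Fin (A i),
          (if i = j then |p i b - q i b| else if i ∈ T then q i b else p i b)
            = ∑ b, |p j b - q j b| := by
        rw [Finset.prod_eq_single j]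
        · simp
        · intro i _ hij
          by_cases hiT : i ∈ T <;> simp [hij, hiT, hp1, hq1]
        · simp
      rw [← h2, h]
      refine Finset.sum_congr rfl fun a _ => ?_
      rw [← Finset.mul_prod_erase _ _ (Finset.mem_univ j),
        ← Finset.mul_prod_erase _ (fun i => if i ∈ T then q i (a i) else p i (a i))
          (Finset.mem_univ j),
        ← Finset.mul_prod_erase _ (fun i => if i = j then |p i (a i) - q i (a i)|
          else if i ∈ T then q i (a i) else p i (a i)) (Finset.mem_univ j)]
      have e1 : ∏ i ∈ Finset.univ.erase j, (if i ∈ insert j T then q i (a i) else p i (a i))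
          = ∏ i ∈ Finset.univ.erase j, (if i ∈ T then q i (a i) else p i (a i)) := by
        refine Finset.prod_congr rfl fun i hi => ?_
        simp [Finset.ne_of_mem_erase hi]
      have e2 : ∏ i ∈ Finset.univ.erase j, (if i = j then |p i (a i) - q i (a i)|
          else if i ∈ T then q i (a i) else p i (a i))
          = ∏ i ∈ Finset.univ.erase j, (if i ∈ T then q i (a i) else p i (a i)) := by
        refine Finset.prod_congr rfl fun i hi => ?_
        simp [Finset.ne_of_mem_erase hi]
      have e3 : 0 ≤ ∏ i ∈ Finset.univ.erase j, (if i ∈ T then q i (a i) else p i (a i)) := by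
        refine Finset.prod_nonneg fun i _ => ?_
        split_ifs
        exacts [hq _ _, hp _ _]
      rw [e1, e2, ← sub_mul, abs_mul, abs_of_nonneg e3]
      simp [hj, abs_sub_comm]
    rw [← key]
    refine le_trans ?_ (add_le_add_right ih _)
    rw [← Finset.sum_add_distrib]
    exact Finset.sum_le_sum fun a _ => abs_sub_le _ _ _

lemma card_le_Amax (A : Fin n → ℕ) (i : Fin n) : (A i : ℝ) ≤ Amax A := by
  exact_mod_cast Finset.le_sup (f := A) (Finset.mem_univ i)

lemma sum_abs_jointProb_sub_le {π π' : Profile n S A} (hπ : IsProfile π) (hπ' : IsProfile π')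
    {δ : ℝ} (hδ : 0 ≤ δ) (hd : ∀ j v b, |π j v b - π' j v b| ≤ δ) (s : Fin S) :
    ∑ a, |jointProb π s a - jointProb π' s a| ≤ n * Amax A * δ := by
  have h := sum_abs_prod_sub_prod_le (fun i => π i s) (fun i => π' i s)
    (fun i b => hπ.1 i s b) (fun i => hπ.2 i s) (fun i b => hπ'.1 i s b) (fun i => hπ'.2 i s)
    Finset.univ
  simp only [Finset.mem_univ, if_true] at h
  calc ∑ a, |jointProb π s a - jointProb π' s a|
      = ∑ a : ∀ i, Fin (A i), |∏ i, π' i s (a i) - ∏ i, π i s (a i)| :=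
        Finset.sum_congr rfl fun a _ => abs_sub_comm _ _
    _ ≤ ∑ i, ∑ b, |π i s b - π' i s b| := h
    _ ≤ ∑ i : Fin n, (Amax A : ℝ) * δ := by
        refine Finset.sum_le_sum fun i _ => ?_
        calc ∑ b, |π i s b - π' i s b| ≤ ∑ _b : Fin (A i), δ :=
              Finset.sum_le_sum fun b _ => hd i s b
          _ = A i * δ := by simp
          _ ≤ Amax A * δ := mul_le_mul_of_nonneg_right (card_le_Amax A i) hδ
    _ = n * Amax A * δ := by simp [mul_assoc]

/-! ### The value function -/

lemma Pmat_nonneg (g : SG n S A) {π : Profile n S A} (hπ : IsProfile π) (s s' : Fin S) :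
    0 ≤ g.Pmat π s s' :=
  Finset.sum_nonneg fun a _ => mul_nonneg (jointProb_nonneg hπ s a) (g.P_nonneg s a s')

lemma Pmat_sum (g : SG n S A) {π : Profile n S A} (hπ : IsProfile π) (s : Fin S) :
    ∑ s', g.Pmat π s s' = 1 := by
  unfold Pmat
  rw [Finset.sum_comm]
  simp_rw [← Finset.mul_sum, g.P_sum_one, mul_one]
  exact sum_jointProb hπ s

/-- A subsolution of the discounted recursion with source `c` is at most `c / (1 - γ)`: evaluate at
a state where `|x|` is maximal. -/
lemma abs_le_of_contraction (g : SG n S A) {π : Profile n S A} (hπ : IsProfile π)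
    (x : Fin S → ℝ) (c : ℝ) (h : ∀ s, |x s| ≤ c + g.γ * |∑ s', g.Pmat π s s' * x s'|)
    (s : Fin S) : |x s| ≤ c / (1 - g.γ) := by
  obtain ⟨m, -, hm⟩ := Finset.exists_max_image Finset.univ (fun t => |x t|) ⟨s, Finset.mem_univ s⟩
  have h1 : |∑ s', g.Pmat π m s' * x s'| ≤ |x m| :=
    calc |∑ s', g.Pmat π m s' * x s'| ≤ ∑ s', |g.Pmat π m s' * x s'| :=
          Finset.abs_sum_le_sum_abs _ _
      _ ≤ ∑ s', g.Pmat π m s' * |x m| := by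
          refine Finset.sum_le_sum fun t _ => ?_
          rw [abs_mul, abs_of_nonneg (g.Pmat_nonneg hπ m t)]
          exact mul_le_mul_of_nonneg_left (hm t (Finset.mem_univ t)) (g.Pmat_nonneg hπ m t)
      _ = |x m| := by rw [← Finset.sum_mul, g.Pmat_sum hπ, one_mul]
  have h2 := mul_le_mul_of_nonneg_left h1 g.γ_nonneg
  have h3 := h m
  refine (hm s (Finset.mem_univ s)).trans ?_
  rw [le_div_iff₀ (by linarith [g.γ_lt_one])]
  nlinarith

lemma isUnit_one_sub (g : SG n S A) {π : Profile n S A} (hπ : IsProfile π) :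
    IsUnit (1 - g.γ • g.Pmat π) := by
  rw [Matrix.isUnit_iff_isUnit_det, isUnit_iff_ne_zero]
  intro h0
  obtain ⟨v, hv, hv0⟩ := Matrix.exists_mulVec_eq_zero_iff.2 h0
  refine hv (funext fun t => ?_)
  have h1 : ∀ s, v s = g.γ * ∑ s', g.Pmat π s s' * v s' := by
    intro s
    have := congrFun hv0 s
    rw [Matrix.sub_mulVec, Matrix.one_mulVec, Matrix.smul_mulVec] at this
    simp only [Pi.sub_apply, Pi.smul_apply, Pi.zero_apply, smul_eq_mul, Matrix.mulVec,
      dotProduct] at this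
    linarith
  have h2 := g.abs_le_of_contraction hπ v 0 (fun s => by
    conv_lhs => rw [h1 s]
    rw [abs_mul, abs_of_nonneg g.γ_nonneg, zero_add]) t
  simpa using h2

/-- The Bellman equation. -/
lemma V_eq (g : SG n S A) {π : Profile n S A} (hπ : IsProfile π) (i : Fin n) (s : Fin S) :
    g.V π i s = g.rvec π i s + g.γ * ∑ s', g.Pmat π s s' * g.V π i s' := by
  have h : Matrix.mulVec (1 - g.γ • g.Pmat π) (g.V π i) = g.rvec π i := by
    unfold V
    rw [Matrix.mulVec_mulVec, Matrix.mul_nonsing_inv _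
      ((Matrix.isUnit_iff_isUnit_det _).1 (g.isUnit_one_sub hπ)), Matrix.one_mulVec]
  have := congrFun h s
  rw [Matrix.sub_mulVec, Matrix.one_mulVec, Matrix.smul_mulVec] at this
  simp only [Pi.sub_apply, Pi.smul_apply, smul_eq_mul, Matrix.mulVec, dotProduct] at this
  linarith

lemma abs_V_le (g : SG n S A) {π : Profile n S A} (hπ : IsProfile π) (i : Fin n) (s : Fin S) :
    |g.V π i s| ≤ g.Rmax / (1 - g.γ) := by
  refine g.abs_le_of_contraction hπ (g.V π i) g.Rmax (fun t => ?_) s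
  have hr0 : 0 ≤ g.rvec π i t :=
    Finset.sum_nonneg fun a _ => mul_nonneg (jointProb_nonneg hπ t a) (g.r_nonneg i t a)
  have hr : g.rvec π i t ≤ g.Rmax :=
    calc g.rvec π i t ≤ ∑ a, jointProb π t a * g.Rmax := Finset.sum_le_sum fun a _ =>
          mul_le_mul_of_nonneg_left (g.r_le_Rmax i t a) (jointProb_nonneg hπ t a)
      _ = g.Rmax := by rw [← Finset.sum_mul, sum_jointProb hπ, one_mul]
  rw [g.V_eq hπ i t]
  refine (abs_add_le _ _).trans ?_
  rw [abs_of_nonneg hr0, abs_mul, abs_of_nonneg g.γ_nonneg]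
  linarith

/-- Right-hand side of the Bellman equation for `π`, with an arbitrary continuation value `W`,
as an expectation over joint actions. -/
lemma bellman_eq_sum (g : SG n S A) (π : Profile n S A) (i : Fin n) (W : Fin S → ℝ) (s : Fin S) :
    g.rvec π i s + g.γ * ∑ s', g.Pmat π s s' * W s'
      = ∑ a, jointProb π s a * (g.r i s a + g.γ * ∑ s', g.P s a s' * W s') := by
  unfold rvec Pmat
  simp_rw [mul_add, Finset.sum_add_distrib, Finset.sum_mul, Finset.mul_sum]
  congr 1
  rw [Finset.sum_comm]
  exact Finset.sum_congr rfl fun a _ => Finset.sum_congr rfl fun t _ => by ring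

lemma V_lipschitz (g : SG n S A) {π π' : Profile n S A} (hπ : IsProfile π) (hπ' : IsProfile π')
    {δ : ℝ} (hδ : 0 ≤ δ) (hd : ∀ j v b, |π j v b - π' j v b| ≤ δ) (i : Fin n) (s : Fin S) :
    |g.V π i s - g.V π' i s| ≤ n * Amax A * g.Rmax / (1 - g.γ) ^ 2 * δ := by
  have hγ : 0 < 1 - g.γ := by linarith [g.γ_lt_one]
  have hM : 0 ≤ g.Rmax / (1 - g.γ) := (abs_nonneg _).trans (g.abs_V_le hπ i s)
  have hbr : ∀ t a, |g.r i t a + g.γ * ∑ s', g.P t a s' * g.V π' i s'|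
      ≤ g.Rmax / (1 - g.γ) := by
    intro t a
    have h1 : |∑ s', g.P t a s' * g.V π' i s'| ≤ g.Rmax / (1 - g.γ) :=
      calc |∑ s', g.P t a s' * g.V π' i s'| ≤ ∑ s', |g.P t a s' * g.V π' i s'| :=
            Finset.abs_sum_le_sum_abs _ _
        _ ≤ ∑ s', g.P t a s' * (g.Rmax / (1 - g.γ)) := by
            refine Finset.sum_le_sum fun u _ => ?_
            rw [abs_mul, abs_of_nonneg (g.P_nonneg t a u)]
            exact mul_le_mul_of_nonneg_left (g.abs_V_le hπ' i u) (g.P_nonneg t a u)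
        _ = g.Rmax / (1 - g.γ) := by rw [← Finset.sum_mul, g.P_sum_one, one_mul]
    calc |g.r i t a + g.γ * ∑ s', g.P t a s' * g.V π' i s'|
        ≤ |g.r i t a| + |g.γ * ∑ s', g.P t a s' * g.V π' i s'| := abs_add_le _ _
      _ ≤ g.Rmax + g.γ * (g.Rmax / (1 - g.γ)) := by
          rw [abs_of_nonneg (g.r_nonneg i t a), abs_mul, abs_of_nonneg g.γ_nonneg]
          exact add_le_add (g.r_le_Rmax i t a) (mul_le_mul_of_nonneg_left h1 g.γ_nonneg)
      _ = g.Rmax / (1 - g.γ) := by field_simp; ring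
  have h := g.abs_le_of_contraction hπ (fun t => g.V π i t - g.V π' i t)
    (n * Amax A * δ * (g.Rmax / (1 - g.γ))) (fun t => ?_) s
  · refine h.trans (le_of_eq ?_)
    field_simp
  · -- `V - V'` is the change of the Bellman operator at `V'` plus `γ P^π (V - V')`.
    have hsplit : g.V π i t - g.V π' i t
        = ∑ a, (jointProb π t a - jointProb π' t a)
            * (g.r i t a + g.γ * ∑ s', g.P t a s' * g.V π' i s')
          + g.γ * ∑ s', g.Pmat π t s' * (g.V π i s' - g.V π' i s') := by
      have h1 := g.V_eq hπ i t
      have h2 := g.V_eq hπ' i t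
      have h3 := g.bellman_eq_sum π i (g.V π' i) t
      have h4 := g.bellman_eq_sum π' i (g.V π' i) t
      simp_rw [sub_mul, mul_sub, Finset.sum_sub_distrib]
      rw [← h3, ← h4]
      linarith
    conv_lhs => rw [hsplit]
    refine (abs_add_le _ _).trans ?_
    rw [abs_mul g.γ, abs_of_nonneg g.γ_nonneg]
    refine add_le_add_left ?_ _
    calc _ ≤ ∑ a, |(jointProb π t a - jointProb π' t a)
            * (g.r i t a + g.γ * ∑ s', g.P t a s' * g.V π' i s')| :=
          Finset.abs_sum_le_sum_abs _ _
      _ ≤ ∑ a, |jointProb π t a - jointProb π' t a| * (g.Rmax / (1 - g.γ)) := by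
          refine Finset.sum_le_sum fun a _ => ?_
          rw [abs_mul]
          exact mul_le_mul_of_nonneg_left (hbr t a) (abs_nonneg _)
      _ ≤ _ := by
          rw [← Finset.sum_mul]
          exact mul_le_mul_of_nonneg_right (sum_abs_jointProb_sub_le hπ hπ' hδ hd t) hM

/-! ### The displacement of Nash's map -/

lemma isProfile_devProfile {π : Profile n S A} (hπ : IsProfile π) (i : Fin n) (s : Fin S)
    (a : Fin (A i)) : IsProfile (devProfile π i s a) := by
  unfold devProfile
  constructor
  · intro j t b
    by_cases hj : j = i
    · subst hj
      simp only [Function.update_self]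
      split_ifs
      exacts [zero_le_one, le_rfl, hπ.1 _ _ _]
    · rw [Function.update_of_ne hj]
      exact hπ.1 _ _ _
  · intro j t
    by_cases hj : j = i
    · subst hj
      simp only [Function.update_self]
      by_cases ht : t = s
      · simp [ht]
      · simpa [ht] using hπ.2 j t
    · rw [Function.update_of_ne hj]
      exact hπ.2 _ _

lemma devProfile_dist {π π' : Profile n S A} {δ : ℝ} (hδ : 0 ≤ δ)
    (hd : ∀ j v b, |π j v b - π' j v b| ≤ δ) (i : Fin n) (s : Fin S) (a : Fin (A i))
    (j : Fin n) (v : Fin S) (b : Fin (A j)) :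
    |devProfile π i s a j v b - devProfile π' i s a j v b| ≤ δ := by
  unfold devProfile
  by_cases hj : j = i
  · subst hj
    simp only [Function.update_self]
    split_ifs
    · simpa using hδ
    · simpa using hδ
    · exact hd _ _ _
  · rw [Function.update_of_ne hj, Function.update_of_ne hj]
    exact hd _ _ _

lemma D_nonneg (g : SG n S A) (π : Profile n S A) (i : Fin n) (s : Fin S) (a : Fin (A i)) :
    0 ≤ g.D π i s a := le_max_left _ _

lemma D_lipschitz (g : SG n S A) {π π' : Profile n S A} (hπ : IsProfile π) (hπ' : IsProfile π')
    {δ : ℝ} (hδ : 0 ≤ δ) (hd : ∀ j v b, |π j v b - π' j v b| ≤ δ) (i : Fin n) (s : Fin S)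
    (a : Fin (A i)) :
    |g.D π i s a - g.D π' i s a| ≤ 2 * (n * Amax A * g.Rmax / (1 - g.γ) ^ 2 * δ) := by
  have h1 := g.V_lipschitz hπ hπ' hδ hd i s
  have h2 := g.V_lipschitz (isProfile_devProfile hπ i s a) (isProfile_devProfile hπ' i s a) hδ
    (devProfile_dist hδ hd i s a) i s
  unfold D Vdev
  rw [max_comm 0, max_comm 0]
  refine (abs_max_sub_max_le_abs _ _ _).trans ?_
  rw [abs_le] at h1 h2 ⊢
  constructor <;> linarith [h1.1, h1.2, h2.1, h2.2]

/-- The rows of `f π - π` sum to zero. -/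
lemma sum_f_sub (g : SG n S A) {π : Profile n S A} (hπ : IsProfile π) (i : Fin n) (s : Fin S) :
    ∑ a, (g.f π i s a - π i s a) = 0 := by
  have h0 : 0 ≤ ∑ b, g.D π i s b := Finset.sum_nonneg fun b _ => g.D_nonneg π i s b
  rw [Finset.sum_sub_distrib, hπ.2]
  unfold f
  rw [← Finset.sum_div, Finset.sum_add_distrib, hπ.2, div_self (by linarith), sub_self]

/-- The displacement `(p + x) / (1 + X) - p` of one coordinate is `1`-Lipschitz in the `ℓ¹` sense
in the probability `p`, its gain `x` and the total gain `X`. -/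
lemma displacement_lipschitz {p p' x x' X X' δ e E : ℝ} (hx' : 0 ≤ x')
    (hX : 0 ≤ X) (hxX' : x' ≤ X') (hp0' : 0 ≤ p') (hp1' : p' ≤ 1)
    (hp : |p - p'| ≤ δ) (hx : |x - x'| ≤ e) (hE : |X - X'| ≤ E) :
    |((p + x) / (1 + X) - p) - ((p' + x') / (1 + X') - p')| ≤ δ + e + E := by
  have hX' : 0 ≤ X' := hx'.trans hxX'
  have h1 : 0 < 1 + X := by linarith
  have h1' : 0 < 1 + X' := by linarith
  set q := (p' + x') / (1 + X') with hq
  have hq0 : 0 ≤ q := by positivity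
  have hq1 : q ≤ 1 := by rw [hq, div_le_one h1']; linarith
  have hqe : q * (1 + X') = p' + x' := by rw [hq]; field_simp
  have e1 : ((p + x) / (1 + X) - p) - (q - p')
      = ((x - x') - (p - p') * X - q * (X - X')) / (1 + X) := by
    rw [eq_div_iff h1.ne']
    have : (p + x) / (1 + X) * (1 + X) = p + x := by field_simp
    linear_combination this - hqe
  have hδ : 0 ≤ δ := (abs_nonneg _).trans hp
  have he : 0 ≤ e := (abs_nonneg _).trans hx
  have hE0 : 0 ≤ E := (abs_nonneg _).trans hE
  rw [e1, abs_div, abs_of_pos h1, div_le_iff₀ h1]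
  have t1 : |(p - p') * X| ≤ δ * X := by
    rw [abs_mul, abs_of_nonneg hX]; exact mul_le_mul_of_nonneg_right hp hX
  have t2 : |q * (X - X')| ≤ E := by
    rw [abs_mul, abs_of_nonneg hq0]
    calc q * |X - X'| ≤ 1 * |X - X'| := mul_le_mul_of_nonneg_right hq1 (abs_nonneg _)
      _ ≤ E := by linarith
  have t3 := abs_sub ((x - x') - (p - p') * X) (q * (X - X'))
  have t4 := abs_sub (x - x') ((p - p') * X)
  nlinarith [mul_nonneg he hX, mul_nonneg hE0 hX]

/-- Once a profile and a state exist, every agent has an action. -/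
lemma one_le_card {π : Profile n S A} (hπ : IsProfile π) (s : Fin S) (i : Fin n) : 1 ≤ A i := by
  by_contra h
  have h0 : A i = 0 := by omega
  have : IsEmpty (Fin (A i)) := by rw [h0]; infer_instance
  have := hπ.2 i s
  simp at this

lemma f_sub_lipschitz (g : SG n S A) {π π' : Profile n S A} (hπ : IsProfile π)
    (hπ' : IsProfile π') {δ : ℝ} (hδ : 0 ≤ δ) (hd : ∀ j v b, |π j v b - π' j v b| ≤ δ)
    (i : Fin n) (s : Fin S) (a : Fin (A i)) :
    |(g.f π i s a - π i s a) - (g.f π' i s a - π' i s a)|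
      ≤ (9 * n * S ^ 2 * (Amax A : ℝ) ^ 2 * g.Rmax / (1 - g.γ) ^ 2 + 1) * δ := by
  set c : ℝ := 2 * (n * Amax A * g.Rmax / (1 - g.γ) ^ 2 * δ) with hc
  have hD := fun b => g.D_lipschitz hπ hπ' hδ hd i s b
  have hc0 : 0 ≤ c := (abs_nonneg _).trans (hD a)
  have hsum : |∑ b, g.D π i s b - ∑ b, g.D π' i s b| ≤ Amax A * c := by
    rw [← Finset.sum_sub_distrib]
    calc _ ≤ ∑ b, |g.D π i s b - g.D π' i s b| := Finset.abs_sum_le_sum_abs _ _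
      _ ≤ ∑ _b : Fin (A i), c := Finset.sum_le_sum fun b _ => hD b
      _ = A i * c := by simp
      _ ≤ Amax A * c := mul_le_mul_of_nonneg_right (card_le_Amax A i) hc0
  have hp1 : π' i s a ≤ 1 := by
    rw [← hπ'.2 i s]
    exact Finset.single_le_sum (f := fun b => π' i s b) (fun b _ => hπ'.1 i s b)
      (Finset.mem_univ a)
  have hmain := displacement_lipschitz (g.D_nonneg π' i s a)
    (Finset.sum_nonneg fun b _ => g.D_nonneg π i s b)
    (Finset.single_le_sum (f := fun b => g.D π' i s b) (fun b _ => g.D_nonneg π' i s b)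
      (Finset.mem_univ a))
    (hπ'.1 i s a) hp1 (hd i s a) (hD a) hsum
  refine hmain.trans ?_
  have hA1 : (1 : ℝ) ≤ Amax A :=
    le_trans (by exact_mod_cast one_le_card hπ s i) (card_le_Amax A i)
  have hS1 : (1 : ℝ) ≤ S := by exact_mod_cast (Fin.pos s)
  have hR : 0 ≤ g.Rmax := by
    have := (abs_nonneg _).trans (g.abs_V_le hπ i s)
    have hγ : 0 < 1 - g.γ := by linarith [g.γ_lt_one]
    by_contra hneg
    have := div_neg_of_neg_of_pos (not_le.1 hneg) hγ
    linarith
  -- `(A_max + 1) * 2 ≤ 4 * A_max ≤ 9 * S² * A_max`.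
  set K : ℝ := n * Amax A * g.Rmax / (1 - g.γ) ^ 2 * δ with hK
  have hK0 : 0 ≤ K := by positivity
  have hrw : (9 * n * S ^ 2 * (Amax A : ℝ) ^ 2 * g.Rmax / (1 - g.γ) ^ 2 + 1) * δ
      = 9 * (S : ℝ) ^ 2 * Amax A * K + δ := by rw [hK]; ring
  rw [hrw, hc]
  have hS2 : (1 : ℝ) ≤ (S : ℝ) ^ 2 := one_le_pow₀ hS1
  have hAK : K ≤ Amax A * K := le_mul_of_one_le_left hK0 hA1
  have : (Amax A : ℝ) * K ≤ (S : ℝ) ^ 2 * (Amax A * K) :=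
    le_mul_of_one_le_left (by positivity) hS2
  nlinarith

/-- If a finite family sums to zero and every member is at most `c ≥ 0`, then every member is at least
`-(m - 1) c`, for any `m` bounding the size of the family. -/
lemma neg_le_of_sum_eq_zero {k : ℕ} (x : Fin k → ℝ) (hx : ∑ b, x b = 0) {c m : ℝ} (hc : 0 ≤ c)
    (hm : (k : ℝ) ≤ m) (h : ∀ b, x b ≤ c) (a : Fin k) : -((m - 1) * c) ≤ x a := by
  have h1 : ∑ b ∈ Finset.univ.erase a, x b ≤ (k - 1) * c := by
    calc _ ≤ ∑ _b ∈ Finset.univ.erase a, c := Finset.sum_le_sum fun b _ => h b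
      _ = (k - 1) * c := by
        rw [Finset.sum_const, Finset.card_erase_of_mem (Finset.mem_univ a), Finset.card_univ,
          Fintype.card_fin, nsmul_eq_mul, Nat.cast_sub (Fin.pos a), Nat.cast_one]
  have h2 := Finset.add_sum_erase Finset.univ x (Finset.mem_univ a)
  nlinarith

end SG

open SG in
/-- if near `π` every action `a` of agent `i` at state `s` admits a
profile `π_a` (within `1/d`) on which `f` does not increase the coordinate `(i,s,a)`
and this coordinate minimizes the displacement of `f`, then `π` is an
`A_max²(λ+1)/d`-approximate fixed point of `f`, where `λ = 9nS²A_max²R_max/(1−γ)²`. -/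
theorem approxFixedPt_of_stopping {n S : ℕ} {A : Fin n → ℕ} (g : SG n S A)
    (d : ℕ) (hd : 0 < d) (i : Fin n) (s : Fin S)
    (π : Profile n S A) (hπ : IsProfile π)
    (h : ∀ a : Fin (A i), ∃ πa : Profile n S A, IsProfile πa ∧
      (∀ j v b, |π j v b - πa j v b| ≤ 1 / (d : ℝ)) ∧
      g.f πa i s a ≤ πa i s a ∧
      (∀ (j : Fin n) (v : Fin S) (b : Fin (A j)),
        g.f πa i s a - πa i s a ≤ g.f πa j v b - πa j v b)) :
    ∀ (j : Fin n) (v : Fin S) (b : Fin (A j)),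
      |g.f π j v b - π j v b| ≤
        (Amax A : ℝ) ^ 2 *
          (9 * (n : ℝ) * (S : ℝ) ^ 2 * (Amax A : ℝ) ^ 2 * g.Rmax / (1 - g.γ) ^ 2 + 1)
          / (d : ℝ) := by
  intro j v b
  set L : ℝ :=
    9 * (n : ℝ) * (S : ℝ) ^ 2 * (Amax A : ℝ) ^ 2 * g.Rmax / (1 - g.γ) ^ 2 + 1 with hL
  have hδ : (0 : ℝ) ≤ 1 / (d : ℝ) := by positivity
  set c : ℝ := L * (1 / (d : ℝ)) with hc
  -- The Lipschitz estimate, applied to `π` and itself, shows that the constant is nonnegative.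
  have hc0 : 0 ≤ c := (abs_nonneg _).trans
    (g.f_sub_lipschitz hπ hπ hδ (fun j v b => by simp) j v b)
  set m : ℝ := (Amax A : ℝ) with hm
  have h1 : ∀ a, g.f π i s a - π i s a ≤ c := by
    intro a
    obtain ⟨πa, hπa, hdist, hle, -⟩ := h a
    have := (abs_le.1 (g.f_sub_lipschitz hπ hπa hδ hdist i s a)).2
    linarith
  have h2 := neg_le_of_sum_eq_zero _ (g.sum_f_sub hπ i s) hc0 (card_le_Amax A i) h1
  have h3 : ∀ j v b, -((m + 1) * c) ≤ g.f π j v b - π j v b := by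
    intro j v b
    let a : Fin (A i) := ⟨0, one_le_card hπ s i⟩
    obtain ⟨πa, hπa, hdist, -, hmin⟩ := h a
    have e1 := (abs_le.1 (g.f_sub_lipschitz hπ hπa hδ hdist i s a)).2
    have e2 := (abs_le.1 (g.f_sub_lipschitz hπ hπa hδ hdist j v b)).1
    have e3 := hmin j v b
    have e4 := h2 a
    linarith
  have hA1 : 1 ≤ Amax A := (one_le_card hπ s i).trans (Finset.le_sup (Finset.mem_univ i))
  have hm1 : (1 : ℝ) ≤ m := by rw [hm]; exact_mod_cast hA1
  have h4 := neg_le_of_sum_eq_zero (fun b => -(g.f π j v b - π j v b))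
    (by rw [Finset.sum_neg_distrib, g.sum_f_sub hπ j v, neg_zero])
    (by positivity : 0 ≤ (m + 1) * c) (card_le_Amax A j) (fun b => by linarith [h3 j v b]) b
  have hgoal : m ^ 2 * L / (d : ℝ) = m ^ 2 * c := by rw [hc]; ring
  rw [hgoal, abs_le]
  refine ⟨?_, by nlinarith⟩
  rcases Nat.lt_or_ge 1 (Amax A) with hA2 | hA2
  · have hm2 : (2 : ℝ) ≤ m := by rw [hm]; exact_mod_cast hA2
    have : (m + 1) * c ≤ m ^ 2 * c := mul_le_mul_of_nonneg_right (by nlinarith) hc0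
    linarith [h3 j v b]
  · -- With a single action per agent, `m + 1 ≤ m ^ 2` fails, but the zero row sum forces `G = 0`.
    have hmeq : m = 1 := by rw [hm]; exact_mod_cast le_antisymm hA2 hA1
    have hj : A j = 1 := le_antisymm
      ((Finset.le_sup (f := A) (Finset.mem_univ j)).trans hA2) (one_le_card hπ s j)
    have : Subsingleton (Fin (A j)) := by rw [hj]; infer_instance
    have h5 := g.sum_f_sub hπ j v
    rw [Fintype.sum_subsingleton _ b] at h5
    rw [h5]
    nlinarith
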